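/- Let B be a supersoluble brace and let p be the largest prime in π(B,+) ∪ {2}, where π(B,+) is the set of primes q such that (B,+) has an element of order q. Let π be the set of all primes q ≤ p. Then B is residually π-finite: the intersection of all ideals I of B such that B/I is finite of order a π-number (all prime divisors of |B/I| lie in π) equals {0}. -/

import Mathlib

/-- A (skew left) brace: a set with an additive group structure (not necessarily abelian)
and a multiplicative group structure sharing the same identity, satisfying the skew
distributive law `a * (b + c) = a * b + -a + a * c`. -/
class SkewBrace (B : Type*) extends AddGroup B, Group B where
  one_eq_zero : (1 : B) = (0 : B)
  skew_distrib : ∀ a b c : B, a * (b + c) = a * b + -a + a * c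

/-- A group is supersoluble if it has a finite chain of normal subgroups with all
factors cyclic. -/
def Group.IsSupersoluble (G : Type*) [Group G] : Prop :=
  ∃ (n : ℕ) (H : ℕ → Subgroup G),
    H 0 = ⊥ ∧ H n = ⊤ ∧ (∀ i, (H i).Normal) ∧ (∀ i, i < n → H i ≤ H (i + 1)) ∧
    ∀ i, i < n → ∃ x ∈ H (i + 1), ∀ y ∈ H (i + 1), ∃ k : ℤ, (x ^ k)⁻¹ * y ∈ H i

namespace SkewBrace

variable {B : Type*} [SkewBrace B]

/-- `lam a b = -a + a * b`, i.e. `λ_a(b)`. -/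
def lam (a b : B) : B := -a + a * b

/-- the star operation `a ∗ b = λ_a(b) - b`. -/
def starOp (a b : B) : B := lam a b + -b

/-- the additive commutator `[a,b]_+`. -/
def addCommutator (a b : B) : B := -a + -b + a + b

/-- A subbrace of `B`: a subset that is a subgroup of both `(B,+)` and `(B,·)`. -/
structure Subbrace (B : Type*) [SkewBrace B] where
  carrier : Set B
  zero_mem : (0 : B) ∈ carrier
  add_mem : ∀ {a b : B}, a ∈ carrier → b ∈ carrier → a + b ∈ carrier
  neg_mem : ∀ {a : B}, a ∈ carrier → -a ∈ carrier
  mul_mem : ∀ {a b : B}, a ∈ carrier → b ∈ carrier → a * b ∈ carrier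
  inv_mem : ∀ {a : B}, a ∈ carrier → a⁻¹ ∈ carrier

/-- An ideal of `B`: a subbrace that is normal in `(B,+)` and in `(B,·)` and is
invariant under all the maps `λ_b`. -/
structure BraceIdeal (B : Type*) [SkewBrace B] extends Subbrace B where
  addConj_mem : ∀ (b : B) {a : B}, a ∈ carrier → b + a + -b ∈ carrier
  mulConj_mem : ∀ (b : B) {a : B}, a ∈ carrier → b * a * b⁻¹ ∈ carrier
  lam_mem : ∀ (b : B) {a : B}, a ∈ carrier → lam b a ∈ carrier

/-- The additive subgroup underlying a subbrace. -/
def Subbrace.addSubgroup (S : Subbrace B) : AddSubgroup B where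
  carrier := S.carrier
  zero_mem' := S.zero_mem
  add_mem' := S.add_mem
  neg_mem' := S.neg_mem

/-- The multiplicative subgroup underlying a subbrace. -/
def Subbrace.subgroup (S : Subbrace B) : Subgroup B where
  carrier := S.carrier
  one_mem' := by rw [one_eq_zero]; exact S.zero_mem
  mul_mem' := S.mul_mem
  inv_mem' := S.inv_mem

/-- Given ideals `J ≤ I` of `B`, `MemSocQuotRel I J x` says that the coset of `x`
lies in `Soc(I/J) = Ker(λ) ∩ Z(I/J, +)` (for `I = B` take `I = Set.univ`). -/
def MemSocQuotRel (I J : Set B) (x : B) : Prop :=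
  x ∈ I ∧ (∀ y ∈ I, -y + lam x y ∈ J) ∧ ∀ y ∈ I, -(y + x) + (x + y) ∈ J

/-- Given ideals `J ≤ I` of `B`, `MemZetaQuotRel I J x` says that the coset of `x`
lies in `ζ(I/J) = Soc(I/J) ∩ Z(I/J, ·)`. -/
def MemZetaQuotRel (I J : Set B) (x : B) : Prop :=
  MemSocQuotRel I J x ∧ ∀ y ∈ I, (y * x)⁻¹ * (x * y) ∈ J

/-- The coset of `x` lies in `Soc(B/J)`. -/
def MemSocQuot (J : Set B) (x : B) : Prop := MemSocQuotRel Set.univ J x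

/-- The coset of `x` lies in `ζ(B/J)`. -/
def MemZetaQuot (J : Set B) (x : B) : Prop := MemZetaQuotRel Set.univ J x

/-- For ideals `I ≤ J`, the additive group of the quotient `J/I` is infinite cyclic. -/
def QuotAddInfCyclic (I J : Set B) : Prop :=
  ∃ x ∈ J, (∀ y ∈ J, ∃ n : ℤ, -(n • x) + y ∈ I) ∧ ∀ n : ℤ, n • x ∈ I → n = 0

/-- For ideals `I ≤ J`, the quotient `J/I` has prime order `p`. -/
def QuotPrimeOrder (I J : Set B) (p : ℕ) : Prop :=
  p.Prime ∧ ∃ x ∈ J, x ∉ I ∧ p • x ∈ I ∧ ∀ y ∈ J, ∃ n : ℤ, -(n • x) + y ∈ I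

/-- A brace is supersoluble if it has a finite chain of ideals each factor of which
either is additively infinite cyclic and contained in the socle of the corresponding
quotient, or has prime order. -/
def IsSupersoluble (B : Type*) [SkewBrace B] : Prop :=
  ∃ (n : ℕ) (I : ℕ → BraceIdeal B),
    (I 0).carrier = {0} ∧ (I n).carrier = Set.univ ∧
    (∀ i, i < n → (I i).carrier ⊆ (I (i + 1)).carrier) ∧
    ∀ i, i < n →
      (QuotAddInfCyclic (I i).carrier (I (i + 1)).carrier ∧
        ∀ x ∈ (I (i + 1)).carrier, MemSocQuot (I i).carrier x) ∨
      ∃ p : ℕ, QuotPrimeOrder (I i).carrier (I (i + 1)).carrier p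

/-- The upper socle series of the brace (carrier of the ideal) `I`. -/
def socChainRel (I : Set B) : ℕ → Set B
  | 0 => {0}
  | n + 1 => {x | MemSocQuotRel I (socChainRel I n) x}

/-- The upper central series of the brace (carrier of the ideal) `I`. -/
def zetaChainRel (I : Set B) : ℕ → Set B
  | 0 => {0}
  | n + 1 => {x | MemZetaQuotRel I (zetaChainRel I n) x}

/-- The upper socle series `Soc_n(B)` of `B`. -/
def socChain (B : Type*) [SkewBrace B] : ℕ → Set B := socChainRel Set.univ

/-- The upper central series `ζ_n(B)` of `B`. -/
def zetaChain (B : Type*) [SkewBrace B] : ℕ → Set B := zetaChainRel Set.univ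

/-- A brace is centrally nilpotent if its upper central series reaches `B`. -/
def IsCentrallyNilpotent (B : Type*) [SkewBrace B] : Prop :=
  ∃ m : ℕ, zetaChain B m = Set.univ

end SkewBrace

/-!
In a chain of ideals of `B`, a factor of prime order `q > p` can be moved to the bottom. It passes a
factor of order `r < q` because neither group structure on a brace of order `r * q` has a second
subgroup of order `q`. It also passes an infinite factor in the socle, or merges with it, because
`q` is odd and the infinite cyclic group has no nontrivial automorphism of odd order. A factor of
order `q > p` at the bottom contradicts the choice of `p`, so all finite factors have order at most
`p`.

Next, the infinite factors are moved to the bottom: if an infinite factor lies above a finite one,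
then some multiple of a lift of its generator lies in the socle. Hence `B` has a finite quotient of
`π`-order with torsion-free kernel, and this quotient separates the elements of finite order
from `0`. For any other element, the image in some quotient of the chain is a nonzero multiple
`e • z` of the generator `z` of an infinite factor; modulo `2 ^ |e| • z` it is a nonzero element of
finite order.
-/

namespace SkewBrace

section GroupTheory

@[to_additive]
theorem mem_of_pow_eq_one_of_natCard {G : Type*} [Group G] {H L : Subgroup G} {q r : ℕ}
    (hq : q.Prime) (hH : Nat.card H = q) (hL : Nat.card L = r * q) (hle : H ≤ L) (hr0 : r ≠ 0)
    (hr : r < q) {x : G} (hxL : x ∈ L) (hx : x ^ q = 1) : x ∈ H := by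
  have hrel : H.relIndex L = r := by
    have := Subgroup.relIndex_mul_relIndex ⊥ H L bot_le hle
    rw [Subgroup.relIndex_bot_left, Subgroup.relIndex_bot_left, hH, hL, mul_comm] at this
    exact Nat.eq_of_mul_eq_mul_right hq.pos this
  have hle_r : H.relIndex (.zpowers x) ≤ r := hrel ▸
    Subgroup.relIndex_le_of_le_right (by simpa using hxL) (hrel ▸ hr0)
  have hdvd : H.relIndex (.zpowers x) ∣ q :=
    (H.relIndex_dvd_card _).trans (by simpa using orderOf_dvd_of_pow_eq_one hx)
  have hone : H.relIndex (.zpowers x) = 1 :=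
    (hq.eq_one_or_self_of_dvd _ hdvd).resolve_right (hle_r.trans_lt hr).ne
  exact Subgroup.relIndex_eq_one.mp hone (Subgroup.mem_zpowers x)

variable {G H : Type*} [AddGroup G] [AddGroup H] {θ : AddMonoid.End G} {f : G →+ H} {z : G}

theorem end_pow_apply_of_zsmul {e : ℤ} (hz : θ z = e • z) (n : ℕ) :
    (θ ^ n) z = e ^ n • z := by
  induction n with
  | zero => simp
  | succ n ih =>
    rw [pow_succ', AddMonoid.End.coe_mul, Function.comp_apply, ih, map_zsmul, hz, ← mul_zsmul,
      pow_succ]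

theorem exists_end_pow_apply_eq_add (hker : f.ker = .zmultiples z) (hf : ∀ x, f (θ x) = f x)
    (hz : θ z = z) (b : G) : ∃ c ∈ AddSubgroup.zmultiples z, ∀ n : ℕ, (θ ^ n) b = b + n • c := by
  have hc : -b + θ b ∈ AddSubgroup.zmultiples z := by
    rw [← hker, AddMonoidHom.mem_ker, map_add, map_neg, hf, neg_add_cancel]
  have hfix : θ (-b + θ b) = -b + θ b := by
    obtain ⟨k, hk⟩ := AddSubgroup.mem_zmultiples_iff.mp hc
    rw [← hk, map_zsmul, hz]
  refine ⟨_, hc, fun n ↦ ?_⟩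
  induction n with
  | zero => simp
  | succ n ih =>
    rw [pow_succ', AddMonoid.End.coe_mul, Function.comp_apply, ih, map_add, map_nsmul, hfix,
      succ_nsmul', ← add_assoc, add_neg_cancel_left]

/-- The power of `θ` with exponent the totient fixes `z`, so it shifts every element by a fixed
multiple of `z`. -/
theorem end_pow_eq_one_of_ker_eq_zmultiples (hθ : Function.Injective θ)
    (hker : f.ker = .zmultiples z) (hf : ∀ x, f (θ x) = f x) :
    θ ^ (addOrderOf z * (addOrderOf z).totient) = 1 := by
  rcases Nat.eq_zero_or_pos (addOrderOf z) with h0 | hpos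
  · rw [h0, zero_mul, pow_zero]
  have hfin : IsOfFinAddOrder z := addOrderOf_pos_iff.mp hpos
  obtain ⟨e, he⟩ : ∃ e : ℕ, θ z = e • z := by
    have hz : θ z ∈ f.ker := by
      rw [AddMonoidHom.mem_ker, hf, ← AddMonoidHom.mem_ker, hker]
      exact AddSubgroup.mem_zmultiples z
    rw [hker, ← hfin.mem_multiples_iff_mem_zmultiples] at hz
    exact (AddSubmonoid.mem_multiples_iff _ _).mp hz |>.imp fun _ h ↦ h.symm
  have hcop : e.Coprime (addOrderOf z) := by
    have horder : addOrderOf (e • z) = addOrderOf z := by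
      rw [← he]
      exact addOrderOf_injective θ hθ z
    rw [hfin.addOrderOf_nsmul, Nat.div_eq_self] at horder
    exact Nat.Coprime.symm (horder.resolve_left hpos.ne')
  set ψ := θ ^ (addOrderOf z).totient with hψ
  have hψz : ψ z = z := by
    rw [hψ, end_pow_apply_of_zsmul (e := e) (by rw [he, natCast_zsmul]), ← Nat.cast_pow,
      natCast_zsmul, nsmul_eq_nsmul_iff_modEq.mpr (Nat.ModEq.pow_totient hcop), one_nsmul]
  have hfψ (x : G) : f (ψ x) = f x := by
    rw [hψ]
    induction (addOrderOf z).totient with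
    | zero => simp
    | succ n ih => rw [pow_succ', AddMonoid.End.coe_mul, Function.comp_apply, hf, ih]
  rw [mul_comm, pow_mul, ← hψ]
  ext b
  obtain ⟨c, hc, hpow⟩ := exists_end_pow_apply_eq_add hker hfψ hψz b
  rw [hpow, addOrderOf_dvd_iff_nsmul_eq_zero.mp (addOrderOf_dvd_of_mem_zmultiples hc), add_zero,
    AddMonoid.End.coe_one, id]

theorem zsmul_eq_zero_iff_of_addOrderOf_eq_zero (hz : addOrderOf z = 0) {n : ℤ} :
    n • z = 0 ↔ n = 0 := by
  rw [← addOrderOf_dvd_iff_zsmul_eq_zero, hz, Nat.cast_zero, zero_dvd_iff]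

theorem end_apply_eq_self_of_odd_pow (h0 : addOrderOf z = 0) (hz : θ z ∈ AddSubgroup.zmultiples z)
    {n : ℕ} (hn : Odd n) (hpow : (θ ^ n) z = z) : θ z = z := by
  obtain ⟨e, he⟩ := AddSubgroup.mem_zmultiples_iff.mp hz
  have he1 : e ^ n = 1 := by
    rw [end_pow_apply_of_zsmul he.symm] at hpow
    rw [← sub_eq_zero, ← zsmul_eq_zero_iff_of_addOrderOf_eq_zero h0, sub_zsmul, hpow, one_zsmul,
      add_neg_cancel]
  rw [← he, hn.pow_injective (he1.trans (one_pow n).symm), one_zsmul]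

theorem end_eq_one_of_odd_pow (h0 : addOrderOf z = 0) (hker : f.ker = .zmultiples z)
    (hf : ∀ x, f (θ x) = f x) {n : ℕ} (hn : Odd n) (hpow : θ ^ n = 1) : θ = 1 := by
  have hz : θ z ∈ AddSubgroup.zmultiples z := by
    rw [← hker, AddMonoidHom.mem_ker, hf, ← AddMonoidHom.mem_ker, hker]
    exact AddSubgroup.mem_zmultiples z
  have hfix : θ z = z := end_apply_eq_self_of_odd_pow h0 hz hn (by rw [hpow]; rfl)
  ext b
  obtain ⟨c, hc, hshift⟩ := exists_end_pow_apply_eq_add hker hf hfix b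
  obtain ⟨k, rfl⟩ := AddSubgroup.mem_zmultiples_iff.mp hc
  have hk : n • k • z = 0 := by simpa [hpow] using hshift n
  rw [← natCast_zsmul, ← mul_zsmul, zsmul_eq_zero_iff_of_addOrderOf_eq_zero h0] at hk
  have hk0 : k = 0 := by simpa [hn.pos.ne'] using hk
  simpa [hk0] using hshift 1

theorem zmultiples_sup_eq_or_exists_nsmul_eq_zero {u : G} (huz : AddCommute u z) {q : ℕ}
    (hq : q.Prime) (hqu : q • u ∈ AddSubgroup.zmultiples z) :
    (∃ w, AddSubgroup.zmultiples u ⊔ .zmultiples z = .zmultiples w ∧ q • w = z) ∨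
      ∃ k : ℤ, q • (u + k • z) = 0 := by
  obtain ⟨m, hm⟩ := AddSubgroup.mem_zmultiples_iff.mp hqu
  have hcomm (a b : ℤ) : AddCommute (a • u) (b • z) := (huz.zsmul_left a).zsmul_right b
  by_cases hdvd : (q : ℤ) ∣ m
  · obtain ⟨k, rfl⟩ := hdvd
    refine .inr ⟨-k, ?_⟩
    rw [(huz.zsmul_right (-k)).add_nsmul, ← hm, ← natCast_zsmul, ← mul_zsmul, ← add_zsmul]
    simp
  -- Now `m` is prime to `q`, so a Bézout combination of `u` and `z` generates both.
  obtain ⟨b, a, hab⟩ : IsCoprime (q : ℤ) m :=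
    (Nat.prime_iff_prime_int.mp hq).coprime_iff_not_dvd.mpr hdvd
  have hqu' (n : ℤ) : (n * q) • u = (n * m) • z := by rw [mul_zsmul, natCast_zsmul, ← hm, mul_zsmul]
  have hqw : (q : ℤ) • (a • u + b • z) = z := by
    rw [(hcomm a b).zsmul_add, ← mul_zsmul, ← mul_zsmul, mul_comm, hqu', ← add_zsmul,
      mul_comm _ b, add_comm, hab, one_zsmul]
  have hmw : m • (a • u + b • z) = u := by
    rw [(hcomm a b).zsmul_add, ← mul_zsmul, ← mul_zsmul, mul_comm m b, ← hqu', ← add_zsmul,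
      mul_comm m a, add_comm, hab, one_zsmul]
  refine .inl ⟨a • u + b • z, le_antisymm ?_ ?_, by rwa [natCast_zsmul] at hqw⟩
  · rw [sup_le_iff, AddSubgroup.zmultiples_le, AddSubgroup.zmultiples_le]
    exact ⟨⟨m, hmw⟩, ⟨q, hqw⟩⟩
  · rw [AddSubgroup.zmultiples_le]
    exact add_mem (AddSubgroup.mem_sup_left ⟨a, rfl⟩) (AddSubgroup.mem_sup_right ⟨b, rfl⟩)

theorem totient_mem_smoothNumbers {n N : ℕ} (hn : n ∈ N.smoothNumbers) :
    n.totient ∈ N.smoothNumbers := by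
  have hprod : ∏ q ∈ n.primeFactors, (q - 1) ∈ N.smoothNumbers := by
    refine Finset.prod_induction _ (· ∈ N.smoothNumbers) (fun _ _ ↦ Nat.mul_mem_smoothNumbers)
      (by simp [Nat.mem_smoothNumbers]) fun q hq ↦ ?_
    have hqp := Nat.prime_of_mem_primeFactors hq
    have hqN := Nat.mem_smoothNumbers'.mp hn q hqp (Nat.dvd_of_mem_primeFactors hq)
    exact Nat.mem_smoothNumbers_of_lt (by have := hqp.two_le; omega) (by omega)
  refine Nat.mem_smoothNumbers_of_dvd (Nat.mul_mem_smoothNumbers hn hprod) ?_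
  exact ⟨_, (Nat.totient_mul_prod_primeFactors n).symm⟩

end GroupTheory

section Lambda

variable {B : Type*} [SkewBrace B]

theorem mul_eq_add_lam (a b : B) : a * b = a + lam a b := (add_neg_cancel_left a (a * b)).symm

theorem lam_add (a b c : B) : lam a (b + c) = lam a b + lam a c := by
  simp only [lam, skew_distrib, add_assoc]

theorem lam_one (b : B) : lam 1 b = b := by
  rw [lam, one_mul, one_eq_zero, neg_zero, zero_add]

theorem lam_mul (a b c : B) : lam (a * b) c = lam a (lam b c) := by
  have hneg : lam a (-b) = -lam a b :=
    map_neg (AddMonoidHom.mk' (lam a) (lam_add a)) b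
  rw [lam, mul_assoc, show lam b c = -b + b * c from rfl, lam_add, hneg, mul_eq_add_lam a b,
    mul_eq_add_lam a (b * c), neg_add_rev, add_assoc, neg_add_cancel_left]

/-- The action `λ` of the multiplicative group of a brace on its additive group. -/
def lamHom : B →* AddMonoid.End B where
  toFun a := AddMonoidHom.mk' (lam a) (lam_add a)
  map_one' := by ext b; exact lam_one b
  map_mul' a b := by ext c; exact lam_mul a b c

@[simp]
theorem lamHom_apply (a b : B) : lamHom a b = lam a b := rfl

theorem lam_zsmul (a b : B) (n : ℤ) : lam a (n • b) = n • lam a b := map_zsmul (lamHom a) n b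

theorem lam_inv_lam (a b : B) : lam a⁻¹ (lam a b) = b := by
  rw [← lam_mul, inv_mul_cancel, lam_one]

theorem lam_lam_inv (a b : B) : lam a (lam a⁻¹ b) = b := by
  rw [← lam_mul, mul_inv_cancel, lam_one]

theorem lamHom_injective (a : B) : Function.Injective (lamHom a) :=
  Function.LeftInverse.injective (g := lam a⁻¹) (lam_inv_lam a)

theorem inv_eq_neg_lam_inv (a : B) : a⁻¹ = -lam a⁻¹ a := by
  rw [eq_neg_iff_add_eq_zero, ← mul_eq_add_lam, inv_mul_cancel, one_eq_zero]

theorem lam_inv_mul (a b : B) : lam a (a⁻¹ * b) = -a + b := by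
  rw [lam, mul_inv_cancel_left]

end Lambda

section Conj

variable {G : Type*} [AddGroup G]

/-- Additive conjugation `x ↦ a + x - a`, as an endomorphism so that its powers can be compared
with those of the maps `λ`. -/
def conjEnd (a : G) : AddMonoid.End G := (AddAut.addConj a).toAddMonoidHom

@[simp]
theorem conjEnd_apply (a x : G) : conjEnd a x = a + x + -a := rfl

theorem conjEnd_injective (a : G) : Function.Injective (conjEnd a) := (AddAut.addConj a).injective

theorem conjEnd_nsmul (a : G) (n : ℕ) : conjEnd (n • a) = conjEnd a ^ n := by
  induction n with
  | zero => ext x; simp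
  | succ n ih => ext x; simp [pow_succ, ← ih, succ_nsmul, add_assoc]

theorem conjEnd_eq_one_iff {a : G} : conjEnd a = 1 ↔ ∀ x, AddCommute a x := by
  refine ⟨fun h x ↦ ?_, fun h ↦ ?_⟩
  · exact add_neg_eq_iff_eq_add.mp (DFunLike.congr_fun h x)
  · ext x
    exact add_neg_eq_iff_eq_add.mpr (h x)

end Conj

section LeftIdeal

variable {B : Type*} [SkewBrace B] {H : AddSubgroup B}

/-- A left ideal of a brace: an additive subgroup invariant under all the maps `λ`. -/
def IsLeftIdeal (H : AddSubgroup B) : Prop := ∀ b, ∀ a ∈ H, lam b a ∈ H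

/-- The multiplicative subgroup underlying a left ideal. -/
def IsLeftIdeal.subgroup (hH : IsLeftIdeal H) : Subgroup B where
  carrier := H
  one_mem' := by rw [one_eq_zero]; exact zero_mem H
  mul_mem' {a b} ha hb := by rw [mul_eq_add_lam]; exact add_mem ha (hH a b hb)
  inv_mem' {a} ha := by rw [inv_eq_neg_lam_inv]; exact neg_mem (hH _ a ha)

theorem IsLeftIdeal.pow_addOrderOf_eq_one {t x : B} (ht : IsLeftIdeal (.zmultiples t))
    (hx : x ∈ AddSubgroup.zmultiples t) : x ^ addOrderOf t = 1 := by
  have hcard : Nat.card ht.subgroup = addOrderOf t := Nat.card_zmultiples t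
  rw [← hcard, ← Subgroup.coe_mk ht.subgroup x hx, ← Subgroup.coe_pow, pow_card_eq_one',
    Subgroup.coe_one]

theorem isLeftIdeal_zmultiples {t : B} (ht : ∀ b, lam b t ∈ AddSubgroup.zmultiples t) :
    IsLeftIdeal (.zmultiples t) := by
  rintro b _ ⟨n, rfl⟩
  simpa only [lam_zsmul] using zsmul_mem (ht b) n

theorem IsLeftIdeal.zmultiples_zsmul {t : B} (ht : IsLeftIdeal (.zmultiples t)) (m : ℤ) :
    IsLeftIdeal (.zmultiples (m • t)) := by
  refine isLeftIdeal_zmultiples fun b ↦ ?_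
  obtain ⟨e, he⟩ := ht b t (AddSubgroup.mem_zmultiples t)
  exact ⟨e, by simp only [lam_zsmul, ← he, zsmul_comm]⟩

theorem IsLeftIdeal.neg_add_mem_iff (hH : IsLeftIdeal H) (a b : B) : -a + b ∈ H ↔ a⁻¹ * b ∈ H := by
  rw [← lam_inv_mul]
  exact ⟨fun h ↦ lam_inv_lam a (a⁻¹ * b) ▸ hH a⁻¹ _ h, hH a _⟩

/-- A left ideal that is normal in both groups is an ideal. -/
def IsLeftIdeal.braceIdeal (hH : IsLeftIdeal H) (hadd : H.Normal) (hmul : hH.subgroup.Normal) :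
    BraceIdeal B where
  carrier := H
  zero_mem := zero_mem H
  add_mem := add_mem
  neg_mem := neg_mem
  mul_mem := hH.subgroup.mul_mem
  inv_mem := hH.subgroup.inv_mem
  addConj_mem b _ ha := hadd.conj_mem _ ha b
  mulConj_mem b _ ha := hmul.conj_mem _ ha b
  lam_mem b _ ha := hH b _ ha

end LeftIdeal

section Socle

variable {B : Type*} [SkewBrace B]

theorem mul_eq_add_of_lam_eq_self {x : B} (hx : ∀ b, lam x b = b) (b : B) : x * b = x + b := by
  rw [mul_eq_add_lam, hx]

theorem pow_eq_nsmul {x : B} (hx : ∀ b, lam x b = b) (n : ℕ) : x ^ n = n • x := by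
  induction n with
  | zero => rw [pow_zero, zero_nsmul, one_eq_zero]
  | succ n ih => rw [pow_succ', ih, mul_eq_add_of_lam_eq_self hx, succ_nsmul']

variable (B) in
/-- The socle `Soc(B) = Ker(λ) ∩ Z(B, +)`, as an additive subgroup. -/
def socle : AddSubgroup B where
  carrier := {x | (∀ b, lam x b = b) ∧ ∀ b, AddCommute x b}
  zero_mem' := ⟨fun b ↦ by rw [← one_eq_zero, lam_one], AddCommute.zero_left⟩
  add_mem' {x y} hx hy := ⟨fun b ↦ by rw [← mul_eq_add_of_lam_eq_self hx.1, lam_mul, hy.1, hx.1],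
    fun b ↦ (hx.2 b).add_left (hy.2 b)⟩
  neg_mem' {x} hx := by
    refine ⟨fun b ↦ ?_, fun b ↦ (hx.2 b).neg_left⟩
    have hinv : x⁻¹ = -x := inv_eq_of_mul_eq_one_right <| by
      rw [mul_eq_add_of_lam_eq_self hx.1, add_neg_cancel, one_eq_zero]
    rw [← hinv, ← hx.1 (lam x⁻¹ b), lam_lam_inv]

theorem lam_eq_self_of_mem_socle {x : B} (hx : x ∈ socle B) (b : B) : lam x b = b := hx.1 b

theorem addCommute_of_mem_socle {x : B} (hx : x ∈ socle B) (b : B) : AddCommute x b := hx.2 b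

theorem mul_eq_add_of_mem_socle {x : B} (hx : x ∈ socle B) (b : B) : x * b = x + b :=
  mul_eq_add_of_lam_eq_self hx.1 b

theorem mem_socle_iff {x : B} : x ∈ socle B ↔ lamHom x = 1 ∧ conjEnd x = 1 := by
  rw [conjEnd_eq_one_iff, DFunLike.ext_iff]
  rfl

theorem mul_conj_of_mem_socle {x : B} (hx : x ∈ socle B) (b : B) : b * x * b⁻¹ = lam b x := by
  have hlam (c : B) : lam (b * x * b⁻¹) c = c := by
    rw [lam_mul, lam_mul, hx.1, lam_lam_inv]
  have hcomm : lam b x + b = b + lam b x := by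
    have h := congrArg (lam b) (hx.2 (lam b⁻¹ b)).eq
    rwa [lam_add, lam_add, lam_lam_inv] at h
  have hmul : b * x * b⁻¹ + b = lam b x + b := by
    rw [← mul_eq_add_of_lam_eq_self hlam, inv_mul_cancel_right, mul_eq_add_lam, hcomm]
  exact add_right_cancel hmul

/-- A left ideal contained in the socle is an ideal. -/
def IsLeftIdeal.braceIdealOfLeSocle {H : AddSubgroup B} (hH : IsLeftIdeal H) (hsoc : H ≤ socle B) :
    BraceIdeal B :=
  hH.braceIdeal
    ⟨fun x hx b ↦ by rwa [← (addCommute_of_mem_socle (hsoc hx) b).eq, add_neg_cancel_right]⟩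
    ⟨fun x hx b ↦ by
      rw [mul_conj_of_mem_socle (hsoc hx)]
      exact hH b x hx⟩

end Socle

section Hom

/-- A homomorphism of braces. -/
structure BraceHom (B C : Type*) [SkewBrace B] [SkewBrace C] extends B →+ C, B →* C

namespace BraceHom

variable {B C D : Type*} [SkewBrace B] [SkewBrace C] [SkewBrace D]

instance : FunLike (BraceHom B C) B C where
  coe f := f.toFun
  coe_injective f g h := by
    rcases f with ⟨⟨⟨_, _⟩, _⟩, _, _⟩
    rcases g with ⟨⟨⟨_, _⟩, _⟩, _, _⟩
    congr

instance : AddMonoidHomClass (BraceHom B C) B C where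
  map_add f := f.map_add'
  map_zero f := f.map_zero'

instance : MonoidHomClass (BraceHom B C) B C where
  map_mul f := f.map_mul'
  map_one f := f.map_one'

/-- A homomorphism of braces from an additive homomorphism preserving products. -/
def mk' (f : B →+ C) (hf : ∀ a b, f (a * b) = f a * f b) : BraceHom B C where
  __ := f
  map_one' := by
    change f 1 = 1
    rw [one_eq_zero, one_eq_zero, map_zero]
  map_mul' := hf

variable (B) in
/-- The identity homomorphism. -/
def id : BraceHom B B := mk' (.id B) fun _ _ ↦ rfl

/-- Composition of brace homomorphisms. -/
def comp (g : BraceHom C D) (f : BraceHom B C) : BraceHom B D :=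
  mk' (g.toAddMonoidHom.comp f.toAddMonoidHom) fun a b ↦ by
    change g (f (a * b)) = g (f a) * g (f b)
    rw [map_mul, map_mul]

@[simp]
theorem comp_apply (g : BraceHom C D) (f : BraceHom B C) (x : B) : g.comp f x = g (f x) := rfl

theorem map_lam (f : BraceHom B C) (a b : B) : f (lam a b) = lam (f a) (f b) := by
  simp only [lam, map_add, map_neg, map_mul]

/-- The kernel of a brace homomorphism, as an additive subgroup. -/
def ker (f : BraceHom B C) : AddSubgroup B := f.toAddMonoidHom.ker

@[simp]
theorem mem_ker {f : BraceHom B C} {x : B} : x ∈ f.ker ↔ f x = 0 := Iff.rfl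

theorem isLeftIdeal_ker (f : BraceHom B C) : IsLeftIdeal f.ker := fun b a ha ↦ by
  rw [mem_ker, map_lam, mem_ker.mp ha]
  exact map_zero (lamHom (f b))

/-- The kernel of a brace homomorphism, as an ideal. -/
def kerIdeal (f : BraceHom B C) : BraceIdeal B :=
  f.isLeftIdeal_ker.braceIdeal f.toAddMonoidHom.normal_ker
    ⟨fun a ha b ↦ by
      change f (b * a * b⁻¹) = 0
      rw [map_mul, map_mul, show f a = 1 from ha.trans one_eq_zero.symm, mul_one, ← map_mul,
        mul_inv_cancel, map_one, one_eq_zero]⟩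

theorem map_mem_socle {f : BraceHom B C} (hf : Function.Surjective f) {x : B} (hx : x ∈ socle B) :
    f x ∈ socle C := by
  refine ⟨fun c ↦ ?_, fun c ↦ ?_⟩ <;> obtain ⟨b, rfl⟩ := hf c
  · rw [← map_lam, lam_eq_self_of_mem_socle hx]
  · exact (addCommute_of_mem_socle hx b).map f

theorem map_zmultiples (f : BraceHom B C) (x : B) :
    (AddSubgroup.zmultiples x).map f.toAddMonoidHom = .zmultiples (f x) :=
  AddMonoidHom.map_zmultiples _ x

theorem ker_comp (g : BraceHom C D) (f : BraceHom B C) :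
    (g.comp f).ker = g.ker.comap f.toAddMonoidHom := rfl

theorem map_ker_comp (g : BraceHom C D) {f : BraceHom B C} (hf : Function.Surjective f) :
    (g.comp f).ker.map f.toAddMonoidHom = g.ker :=
  AddSubgroup.map_comap_eq_self_of_surjective (f := f.toAddMonoidHom) hf g.ker

theorem exists_comp_eq_of_ker_le {f : BraceHom B C} (g : BraceHom B D) (hf : Function.Surjective f)
    (hle : f.ker ≤ g.ker) : ∃ k : BraceHom C D, k.comp f = g := by
  let k := f.toAddMonoidHom.liftOfSurjective hf ⟨g.toAddMonoidHom, hle⟩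
  have hk (x : B) : k (f x) = g x := f.toAddMonoidHom.liftOfRightInverse_comp_apply _ _ _ x
  refine ⟨mk' k fun c d ↦ ?_, DFunLike.ext _ _ hk⟩
  obtain ⟨a, rfl⟩ := hf c
  obtain ⟨b, rfl⟩ := hf d
  rw [← map_mul, hk, hk, hk, map_mul]

theorem index_ker (f : BraceHom B C) (hf : Function.Surjective f) : f.ker.index = Nat.card C := by
  rw [ker, AddSubgroup.index_ker, AddMonoidHom.range_eq_top.mpr hf, AddSubgroup.card_top]

end BraceHom

end Hom

section Quotient

namespace BraceIdeal

variable {B : Type*} [SkewBrace B] (I : BraceIdeal B)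

instance : I.addSubgroup.Normal := ⟨fun _ ha b ↦ I.addConj_mem b ha⟩

instance : I.subgroup.Normal := ⟨fun _ ha b ↦ I.mulConj_mem b ha⟩

theorem isLeftIdeal : IsLeftIdeal I.addSubgroup := fun b _ ha ↦ I.lam_mem b ha

/-- The quotient of a brace by an ideal; it carries a brace structure because the additive and the
multiplicative cosets of an ideal agree. -/
def Quotient : Type _ := B ⧸ I.addSubgroup

/-- The bijection between additive and multiplicative cosets of an ideal, along which the
multiplicative group structure is transported. -/
def quotientEquiv : I.Quotient ≃ B ⧸ I.subgroup :=
  Quotient.congrRight fun a b ↦ by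
    rw [QuotientAddGroup.leftRel_apply, QuotientGroup.leftRel_apply]
    exact I.isLeftIdeal.neg_add_mem_iff a b

instance : AddGroup I.Quotient := inferInstanceAs (AddGroup (B ⧸ I.addSubgroup))

instance : Group I.Quotient := I.quotientEquiv.group

/-- The quotient map as an additive homomorphism. -/
def addQuotientMap : B →+ I.Quotient := QuotientAddGroup.mk' I.addSubgroup

theorem addQuotientMap_surjective : Function.Surjective I.addQuotientMap :=
  QuotientAddGroup.mk'_surjective _

theorem addQuotientMap_mul (a b : B) :
    I.addQuotientMap (a * b) = I.addQuotientMap a * I.addQuotientMap b :=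
  I.quotientEquiv.injective (I.quotientEquiv.apply_symm_apply _).symm

instance : SkewBrace I.Quotient where
  __ := (inferInstance : AddGroup I.Quotient)
  __ := (inferInstance : Group I.Quotient)
  one_eq_zero := I.quotientEquiv.injective <| (I.quotientEquiv.apply_symm_apply 1).trans <|
    congrArg (QuotientGroup.mk' I.subgroup) one_eq_zero
  skew_distrib a b c := by
    obtain ⟨a, rfl⟩ := I.addQuotientMap_surjective a
    obtain ⟨b, rfl⟩ := I.addQuotientMap_surjective b
    obtain ⟨c, rfl⟩ := I.addQuotientMap_surjective c
    simp only [← map_add, ← addQuotientMap_mul, ← map_neg, skew_distrib]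

/-- The quotient map of a brace by an ideal. -/
def quotientMap : BraceHom B I.Quotient := .mk' I.addQuotientMap I.addQuotientMap_mul

theorem quotientMap_surjective : Function.Surjective I.quotientMap := I.addQuotientMap_surjective

theorem ker_quotientMap : I.quotientMap.ker = I.addSubgroup := QuotientAddGroup.ker_mk' _

end BraceIdeal

end Quotient

universe u

section CyclicQuotient

variable {B C D : Type u} [SkewBrace B] [SkewBrace C] [SkewBrace D]

/-- `f` is the quotient map by an ideal which is additively generated by `z`. -/
structure IsCyclicQuotient (f : BraceHom B C) (z : B) : Prop where
  surjective : Function.Surjective f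
  ker_eq : f.ker = .zmultiples z

/-- `f` is the quotient map by an ideal which is additively infinite cyclic, generated by `z`, and
contained in the socle. -/
structure IsInfiniteSocleQuotient (f : BraceHom B C) (z : B) : Prop
    extends IsCyclicQuotient f z where
  mem_socle : z ∈ socle B
  addOrderOf_eq_zero : addOrderOf z = 0

namespace IsCyclicQuotient

variable {f : BraceHom B C} {g : BraceHom C D} {z : B}

theorem apply_eq_zero_iff (hf : IsCyclicQuotient f z) {x : B} :
    f x = 0 ↔ x ∈ AddSubgroup.zmultiples z := by
  rw [← hf.ker_eq, BraceHom.mem_ker]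

theorem apply_self (hf : IsCyclicQuotient f z) : f z = 0 :=
  hf.apply_eq_zero_iff.mpr (AddSubgroup.mem_zmultiples z)

theorem isLeftIdeal (hf : IsCyclicQuotient f z) : IsLeftIdeal (.zmultiples z) :=
  hf.ker_eq ▸ f.isLeftIdeal_ker

theorem of_ideal {I : BraceIdeal B} (hI : I.addSubgroup = .zmultiples z) :
    IsCyclicQuotient I.quotientMap z :=
  ⟨I.quotientMap_surjective, I.ker_quotientMap.trans hI⟩

theorem exists_of_mem_socle (hz : z ∈ socle B) (hideal : IsLeftIdeal (.zmultiples z)) :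
    ∃ (E : Type u) (_ : SkewBrace E) (h : BraceHom B E), IsCyclicQuotient h z :=
  ⟨_, _, _, of_ideal (I := hideal.braceIdealOfLeSocle (AddSubgroup.zmultiples_le.mpr hz)) rfl⟩

theorem natCard_eq (hf : IsCyclicQuotient f z) : Nat.card B = addOrderOf z * Nat.card C := by
  rw [← f.index_ker hf.surjective, ← Nat.card_zmultiples, ← hf.ker_eq, AddSubgroup.card_mul_index]

theorem ker_comp_eq_sup {u : B} (hg : IsCyclicQuotient g (f u)) :
    (g.comp f).ker = f.ker ⊔ .zmultiples u := by
  rw [BraceHom.ker_comp, hg.ker_eq, ← BraceHom.map_zmultiples, AddSubgroup.comap_map_eq, sup_comm]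
  rfl

theorem exists_of_ker_eq_sup (hf : Function.Surjective f) {g : BraceHom B D}
    (hg : Function.Surjective g) (hker : g.ker = f.ker ⊔ .zmultiples z) :
    ∃ k : BraceHom C D, IsCyclicQuotient k (f z) := by
  obtain ⟨k, rfl⟩ := BraceHom.exists_comp_eq_of_ker_le g hf (hker.symm ▸ le_sup_left)
  refine ⟨k, Function.Surjective.of_comp hg, ?_⟩
  rw [← BraceHom.map_ker_comp k hf, hker, AddSubgroup.map_sup, BraceHom.map_zmultiples,
    (AddSubgroup.map_eq_bot_iff _).mpr (show f.ker ≤ f.toAddMonoidHom.ker from le_rfl), bot_sup_eq]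

end IsCyclicQuotient

theorem IsInfiniteSocleQuotient.exists_quotient_nsmul {f : BraceHom B C} {z : B}
    (hf : IsInfiniteSocleQuotient f z) (m : ℕ) :
    ∃ (E : Type u) (_ : SkewBrace E) (k : BraceHom B E) (g : BraceHom E C),
      IsCyclicQuotient k (m • z) ∧ IsCyclicQuotient g (k z) ∧ addOrderOf (k z) = m := by
  have hideal : IsLeftIdeal (.zmultiples (m • z)) := by
    rw [← natCast_zsmul]
    exact hf.isLeftIdeal.zmultiples_zsmul m
  obtain ⟨E, _, k, hk⟩ := IsCyclicQuotient.exists_of_mem_socle (nsmul_mem hf.mem_socle m) hideal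
  have hker : f.ker = k.ker ⊔ .zmultiples z := by
    rw [hf.ker_eq, hk.ker_eq, eq_comm, sup_eq_right, AddSubgroup.zmultiples_le]
    exact nsmul_mem (AddSubgroup.mem_zmultiples z) m
  obtain ⟨g, hg⟩ := IsCyclicQuotient.exists_of_ker_eq_sup hk.surjective hf.surjective hker
  refine ⟨E, _, k, g, hk, hg, Nat.dvd_right_iff_eq.mp fun a ↦ ?_⟩
  rw [addOrderOf_dvd_iff_nsmul_eq_zero, ← map_nsmul, hk.apply_eq_zero_iff,
    AddSubgroup.mem_zmultiples_iff, ← Int.natCast_dvd_natCast]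
  refine exists_congr fun e ↦ ?_
  rw [← natCast_zsmul, ← natCast_zsmul, ← mul_zsmul, ← sub_eq_zero (a := (e * m) • z),
    sub_eq_add_neg, ← sub_zsmul, zsmul_eq_zero_iff_of_addOrderOf_eq_zero hf.addOrderOf_eq_zero,
    sub_eq_zero, eq_comm, mul_comm]

end CyclicQuotient

section SmoothChain

/-- `HasSmoothChain p n B` says that `B` can be reduced to the trivial brace by successive quotients
by additively cyclic ideals, each of which either has finite order with all prime divisors at most
`p`, or is infinite and contained in the socle; the latter occurs exactly `n` times. -/
inductive HasSmoothChain (p : ℕ) : ℕ → (B : Type u) → [SkewBrace B] → Prop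
  | trivial {B : Type u} [SkewBrace B] [Subsingleton B] : HasSmoothChain p 0 B
  | finite {n : ℕ} {B C : Type u} [SkewBrace B] [SkewBrace C] {f : BraceHom B C} {z : B}
      (hf : IsCyclicQuotient f z) (hz : addOrderOf z ∈ Nat.smoothNumbers (p + 1))
      (hC : HasSmoothChain p n C) : HasSmoothChain p n B
  | infinite {n : ℕ} {B C : Type u} [SkewBrace B] [SkewBrace C] {f : BraceHom B C} {z : B}
      (hf : IsInfiniteSocleQuotient f z) (hC : HasSmoothChain p n C) : HasSmoothChain p (n + 1) B

variable {B C D : Type u} [SkewBrace B] [SkewBrace C] [SkewBrace D] {p n : ℕ}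

theorem IsCyclicQuotient.exists_mem_socle_apply_eq_nsmul {f : BraceHom B C} {c : B}
    (hf : IsCyclicQuotient f c) {u : B} (hu : f u ∈ socle C) {s : ℕ}
    (hs : s = addOrderOf c * (addOrderOf c).totient) :
    ∃ v ∈ socle B, f v = (s * s) • f u := by
  have hpow {θ : AddMonoid.End B} (hθ : Function.Injective θ) (hfθ : ∀ x, f (θ x) = f x) :
      θ ^ s = 1 := by
    rw [hs]
    exact end_pow_eq_one_of_ker_eq_zmultiples (f := f.toAddMonoidHom) hθ hf.ker_eq hfθ
  have hlam : lamHom (u ^ s) = 1 := by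
    rw [map_pow]
    refine hpow (lamHom_injective u) fun x ↦ ?_
    rw [lamHom_apply, BraceHom.map_lam, lam_eq_self_of_mem_socle hu]
  have hfu : f (u ^ s) = s • f u := by
    rw [map_pow, pow_eq_nsmul (lam_eq_self_of_mem_socle hu)]
  have hconj : conjEnd (s • u ^ s) = 1 := by
    rw [conjEnd_nsmul]
    refine hpow (conjEnd_injective _) fun x ↦ ?_
    rw [conjEnd_apply, map_add, map_add, map_neg, hfu,
      (addCommute_of_mem_socle (nsmul_mem hu s) _).eq, add_neg_cancel_right]
  refine ⟨s • u ^ s, mem_socle_iff.mpr ⟨?_, hconj⟩, by rw [map_nsmul, hfu, mul_nsmul]⟩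
  rw [← pow_eq_nsmul (DFunLike.congr_fun hlam), map_pow, hlam, one_pow]

theorem IsCyclicQuotient.isLeftIdeal_zmultiples_nsmul {f : BraceHom B C} {c : B}
    (hf : IsCyclicQuotient f c) {w : B} (hw : w ∈ socle B)
    (hfw : IsLeftIdeal (.zmultiples (f w))) : IsLeftIdeal (.zmultiples (addOrderOf c • w)) := by
  refine isLeftIdeal_zmultiples fun b ↦ ?_
  obtain ⟨e, he⟩ := AddSubgroup.mem_zmultiples_iff.mp
    (hfw (f b) (f w) (AddSubgroup.mem_zmultiples _))
  have hd : -(e • w) + lam b w ∈ AddSubgroup.zmultiples c := by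
    rw [← hf.apply_eq_zero_iff, map_add, map_neg, map_zsmul, BraceHom.map_lam, he, neg_add_cancel]
  have hmd : addOrderOf c • lam b w = addOrderOf c • e • w := by
    have := addOrderOf_dvd_iff_nsmul_eq_zero.mp (addOrderOf_dvd_of_mem_zmultiples hd)
    rwa [(addCommute_of_mem_socle (neg_mem (zsmul_mem hw e)) _).add_nsmul, neg_nsmul,
      neg_add_eq_zero, eq_comm] at this
  refine ⟨e, ?_⟩
  simp only [← natCast_zsmul] at hmd ⊢
  rw [lam_zsmul, hmd, zsmul_comm]

/-- An infinite factor above a finite one moves below it once its generator is replaced by a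
suitable multiple; the index of this multiple becomes the order of an additional finite factor. -/
theorem HasSmoothChain.exists_infinite_of_finite_of_infinite {f : BraceHom B C} {c : B}
    (hf : IsCyclicQuotient f c) (hc : addOrderOf c ∈ Nat.smoothNumbers (p + 1))
    {g : BraceHom C D} {ζ : C} (hg : IsInfiniteSocleQuotient g ζ) (hD : HasSmoothChain p n D) :
    ∃ (E : Type u) (_ : SkewBrace E) (h : BraceHom B E) (w : B),
      IsInfiniteSocleQuotient h w ∧ HasSmoothChain p n E := by
  set m := addOrderOf c
  obtain ⟨u, rfl⟩ := hf.surjective ζ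
  obtain ⟨v, hv, hfv⟩ := hf.exists_mem_socle_apply_eq_nsmul hg.mem_socle rfl
  set s := m * m.totient
  set N := s * s * m
  have hN_smooth : N ∈ Nat.smoothNumbers (p + 1) := by
    have := Nat.mul_mem_smoothNumbers hc (totient_mem_smoothNumbers hc)
    exact Nat.mul_mem_smoothNumbers (Nat.mul_mem_smoothNumbers this this) hc
  have hfw : f (m • v) = N • f u := by rw [map_nsmul, hfv, ← mul_nsmul]
  have hideal : IsLeftIdeal (.zmultiples (m • v)) := by
    refine hf.isLeftIdeal_zmultiples_nsmul hv ?_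
    rw [hfv, ← natCast_zsmul]
    exact hg.isLeftIdeal.zmultiples_zsmul _
  obtain ⟨E, _, h, hh⟩ := IsCyclicQuotient.exists_of_mem_socle (nsmul_mem hv m) hideal
  have hw0 : addOrderOf (m • v) = 0 := by
    refine addOrderOf_eq_zero fun hfin ↦ addOrderOf_eq_zero_iff.mp hg.addOrderOf_eq_zero ?_
    have hfin_apply : IsOfFinAddOrder (N • f u) := hfw ▸ f.toAddMonoidHom.isOfFinAddOrder hfin
    exact hfin_apply.of_nsmul (Nat.mem_smoothNumbers.mp hN_smooth).1
  obtain ⟨C', _, k, g', hk, hg', hkN⟩ := hg.exists_quotient_nsmul N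
  have hker : (k.comp f).ker = h.ker ⊔ .zmultiples c := by
    rw [← hfw] at hk
    rw [hk.ker_comp_eq_sup, hf.ker_eq, hh.ker_eq, sup_comm]
  obtain ⟨k', hk'⟩ := IsCyclicQuotient.exists_of_ker_eq_sup hh.surjective
    (hk.surjective.comp hf.surjective) hker
  have hhc : addOrderOf (h c) ∈ Nat.smoothNumbers (p + 1) :=
    Nat.mem_smoothNumbers_of_dvd hc (addOrderOf_map_dvd h.toAddMonoidHom c)
  exact ⟨E, _, h, m • v, ⟨hh, nsmul_mem hv m, hw0⟩,
    .finite hk' hhc (.finite hg' (hkN ▸ hN_smooth) hD)⟩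

theorem HasSmoothChain.exists_isInfiniteSocleQuotient (hB : HasSmoothChain p (n + 1) B) :
    ∃ (C : Type u) (_ : SkewBrace C) (f : BraceHom B C) (z : B),
      IsInfiniteSocleQuotient f z ∧ HasSmoothChain p n C := by
  generalize hk : n + 1 = k at hB
  induction hB with
  | trivial => omega
  | finite hf hz _ ih =>
    obtain ⟨D, _, g, ζ, hg, hD⟩ := ih hk
    exact exists_infinite_of_finite_of_infinite hf hz hg hD
  | infinite hf hC =>
    obtain rfl := Nat.succ.inj hk
    exact ⟨_, _, _, _, hf, hC⟩

theorem HasSmoothChain.natCard_mem_smoothNumbers (hB : HasSmoothChain p 0 B) :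
    Nat.card B ∈ Nat.smoothNumbers (p + 1) := by
  generalize hk : 0 = k at hB
  induction hB with
  | trivial => simp [Nat.mem_smoothNumbers]
  | finite hf hz _ ih => exact hf.natCard_eq ▸ Nat.mul_mem_smoothNumbers hz (ih hk)
  | infinite => omega

theorem IsInfiniteSocleQuotient.eq_zero_of_isOfFinAddOrder {f : BraceHom B C} {z : B}
    (hf : IsInfiniteSocleQuotient f z) {x : B} (hx : f x = 0) (hfin : IsOfFinAddOrder x) :
    x = 0 := by
  obtain ⟨k, rfl⟩ := AddSubgroup.mem_zmultiples_iff.mp (hf.apply_eq_zero_iff.mp hx)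
  obtain ⟨m, hm, hmk⟩ := isOfFinAddOrder_iff_nsmul_eq_zero.mp hfin
  rw [← natCast_zsmul, ← mul_zsmul,
    zsmul_eq_zero_iff_of_addOrderOf_eq_zero hf.addOrderOf_eq_zero, mul_eq_zero] at hmk
  rw [hmk.resolve_left (by exact_mod_cast hm.ne'), zero_zsmul]

theorem HasSmoothChain.exists_finite_quotient_torsionFree_ker (hB : HasSmoothChain p n B) :
    ∃ (D : Type u) (_ : SkewBrace D) (g : BraceHom B D), Function.Surjective g ∧
      Nat.card D ∈ Nat.smoothNumbers (p + 1) ∧ ∀ x, g x = 0 → IsOfFinAddOrder x → x = 0 := by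
  induction n generalizing B with
  | zero =>
    exact ⟨B, _, .id B, Function.surjective_id, hB.natCard_mem_smoothNumbers, fun _ hx _ ↦ hx⟩
  | succ n ih =>
    obtain ⟨C, _, f, z, hf, hC⟩ := hB.exists_isInfiniteSocleQuotient
    obtain ⟨D, _, g, hg, hD, htf⟩ := ih hC
    refine ⟨D, _, g.comp f, hg.comp hf.surjective, hD, fun x hx hfin ↦ ?_⟩
    exact hf.eq_zero_of_isOfFinAddOrder (htf (f x) hx (f.toAddMonoidHom.isOfFinAddOrder hfin)) hfin

theorem HasSmoothChain.exists_finite_quotient_apply_ne_zero_of_isOfFinAddOrder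
    (hB : HasSmoothChain p n B) {x : B} (hx : x ≠ 0) (hfin : IsOfFinAddOrder x) :
    ∃ (D : Type u) (_ : SkewBrace D) (g : BraceHom B D), Function.Surjective g ∧
      Nat.card D ∈ Nat.smoothNumbers (p + 1) ∧ g x ≠ 0 := by
  obtain ⟨D, _, g, hg, hD, htf⟩ := hB.exists_finite_quotient_torsionFree_ker
  exact ⟨D, _, g, hg, hD, fun hgx ↦ hx (htf x hgx hfin)⟩

/-- Modulo `2 ^ |e| • z`, the element `e • z` has finite order without being zero. -/
theorem IsInfiniteSocleQuotient.exists_finite_quotient_zsmul_ne_zero (hp : 2 ≤ p)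
    {f : BraceHom B C} {z : B} (hf : IsInfiniteSocleQuotient f z) (hC : HasSmoothChain p n C)
    {e : ℤ} (he : e ≠ 0) :
    ∃ (D : Type u) (_ : SkewBrace D) (g : BraceHom B D), Function.Surjective g ∧
      Nat.card D ∈ Nat.smoothNumbers (p + 1) ∧ g (e • z) ≠ 0 := by
  obtain ⟨E, _, k, g, hk, hg, horder⟩ := hf.exists_quotient_nsmul (2 ^ e.natAbs)
  have hfin : IsOfFinAddOrder (k z) := addOrderOf_pos_iff.mp (horder ▸ Nat.two_pow_pos _)
  have hk0 : k (e • z) ≠ 0 := by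
    rw [map_zsmul, ne_eq, ← addOrderOf_dvd_iff_zsmul_eq_zero, horder, Int.natCast_dvd]
    exact Nat.not_dvd_of_pos_of_lt (Int.natAbs_pos.mpr he) Nat.lt_two_pow_self
  have hsmooth : addOrderOf (k z) ∈ Nat.smoothNumbers (p + 1) := by
    refine Nat.mem_smoothNumbers'.mpr fun q hq hdvd ↦ ?_
    rw [horder] at hdvd
    exact Nat.lt_succ_of_le ((Nat.le_of_dvd two_pos (hq.dvd_of_dvd_pow hdvd)).trans hp)
  have hE : HasSmoothChain p n E := .finite hg hsmooth hC
  obtain ⟨D, _, h, hh, hD, hhx⟩ :=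
    hE.exists_finite_quotient_apply_ne_zero_of_isOfFinAddOrder hk0 (map_zsmul k e z ▸ hfin.zsmul)
  exact ⟨D, _, h.comp k, hh.comp hk.surjective, hD, hhx⟩

theorem HasSmoothChain.exists_finite_quotient_apply_ne_zero (hp : 2 ≤ p)
    (hB : HasSmoothChain p n B) {x : B} (hx : x ≠ 0) :
    ∃ (D : Type u) (_ : SkewBrace D) (g : BraceHom B D), Function.Surjective g ∧
      Nat.card D ∈ Nat.smoothNumbers (p + 1) ∧ g x ≠ 0 := by
  induction hB with
  | trivial => exact absurd (Subsingleton.elim x 0) hx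
  | @finite _ _ _ _ _ f z hf hz hC ih =>
    by_cases hfx : f x = 0
    · obtain ⟨e, rfl⟩ := AddSubgroup.mem_zmultiples_iff.mp (hf.apply_eq_zero_iff.mp hfx)
      have hfin := addOrderOf_ne_zero_iff.mp (Nat.mem_smoothNumbers.mp hz).1
      exact (HasSmoothChain.finite hf hz hC).exists_finite_quotient_apply_ne_zero_of_isOfFinAddOrder
        hx hfin.zsmul
    · obtain ⟨D, _, g, hg, hD, hgx⟩ := ih hfx
      exact ⟨D, _, g.comp f, hg.comp hf.surjective, hD, hgx⟩
  | @infinite _ _ _ _ _ f z hf hC ih =>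
    by_cases hfx : f x = 0
    · obtain ⟨e, rfl⟩ := AddSubgroup.mem_zmultiples_iff.mp (hf.apply_eq_zero_iff.mp hfx)
      exact hf.exists_finite_quotient_zsmul_ne_zero hp hC fun he ↦ hx (by rw [he, zero_zsmul])
    · obtain ⟨D, _, g, hg, hD, hgx⟩ := ih hfx
      exact ⟨D, _, g.comp f, hg.comp hf.surjective, hD, hgx⟩

end SmoothChain

section LargePrime

variable {B C D : Type u} [SkewBrace B] [SkewBrace C] [SkewBrace D]

/-- The last two hypotheses make `⟨t⟩` characteristic in both groups of the kernel of `g`. -/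
theorem IsCyclicQuotient.exists_of_forall_mem_zmultiples {g : BraceHom B D} {t : B} (ht : g t = 0)
    (hadd : ∀ x, g x = 0 → addOrderOf t • x = 0 → x ∈ AddSubgroup.zmultiples t)
    (hmul : IsLeftIdeal (.zmultiples t) → ∀ x, g x = 0 → x ^ addOrderOf t = 1 →
      x ∈ AddSubgroup.zmultiples t) :
    ∃ (E : Type u) (_ : SkewBrace E) (h : BraceHom B E), IsCyclicQuotient h t := by
  have hker : AddSubgroup.zmultiples t ≤ g.ker := AddSubgroup.zmultiples_le.mpr ht
  have map_mem {θ : AddMonoid.End B} (hθ : ∀ x, g x = 0 → g (θ x) = 0) {x : B}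
      (hx : x ∈ AddSubgroup.zmultiples t) : θ x ∈ AddSubgroup.zmultiples t := by
    refine hadd _ (hθ x (hker hx)) ?_
    rw [← map_nsmul, addOrderOf_dvd_iff_nsmul_eq_zero.mp (addOrderOf_dvd_of_mem_zmultiples hx),
      map_zero]
  have hleft : IsLeftIdeal (.zmultiples t) := fun b _ hx ↦
    map_mem (θ := lamHom b) (fun x hx ↦ g.isLeftIdeal_ker b x hx) hx
  have hnormal : (AddSubgroup.zmultiples t).Normal := ⟨fun _ hx b ↦
    map_mem (θ := conjEnd b) (fun x hx ↦ g.kerIdeal.addConj_mem b hx) hx⟩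
  have hmul_normal : hleft.subgroup.Normal := by
    refine ⟨fun x hx b ↦ hmul hleft _ (g.kerIdeal.mulConj_mem b (hker hx)) ?_⟩
    rw [conj_pow, hleft.pow_addOrderOf_eq_one hx, mul_one, mul_inv_cancel]
  exact ⟨_, _, _, of_ideal (I := hleft.braceIdeal hnormal hmul_normal) rfl⟩

theorem IsCyclicQuotient.natCard_ker_comp {f : BraceHom B C} {g : BraceHom C D} {c : B} {d : C}
    (hf : IsCyclicQuotient f c) (hg : IsCyclicQuotient g d) :
    Nat.card (g.comp f).ker = addOrderOf c * addOrderOf d := by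
  have hle : f.ker ≤ (g.comp f).ker := fun x hx ↦ by
    rw [BraceHom.mem_ker, BraceHom.comp_apply, BraceHom.mem_ker.mp hx, map_zero]
  have hrel : f.ker.relIndex (g.comp f).ker = addOrderOf d := by
    rw [BraceHom.ker, AddSubgroup.relIndex_ker, BraceHom.map_ker_comp g hf.surjective, hg.ker_eq,
      Nat.card_zmultiples]
  rw [← AddSubgroup.relIndex_bot_left, ← AddSubgroup.relIndex_mul_relIndex _ _ _ bot_le hle,
    AddSubgroup.relIndex_bot_left, hrel, hf.ker_eq, Nat.card_zmultiples]

theorem IsCyclicQuotient.exists_lift_addOrderOf_eq {f : BraceHom B C} {g : BraceHom C D} {c : B}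
    {d : C} (hf : IsCyclicQuotient f c) (hg : IsCyclicQuotient g d) (hc : addOrderOf c ≠ 0)
    (hd : (addOrderOf d).Prime) (hlt : addOrderOf c < addOrderOf d) :
    ∃ t, addOrderOf t = addOrderOf d ∧ IsCyclicQuotient g (f t) := by
  set r := addOrderOf c
  set q := addOrderOf d with hq
  obtain ⟨u, hu⟩ := hf.surjective d
  have hft : f (r • u) = r • d := by rw [map_nsmul, hu]
  have hft0 : r • d ≠ 0 := by
    rw [ne_eq, ← addOrderOf_dvd_iff_nsmul_eq_zero]
    exact Nat.not_dvd_of_pos_of_lt (Nat.pos_of_ne_zero hc) hlt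
  have hqt : q • r • u = 0 := by
    have hqu : q • u ∈ AddSubgroup.zmultiples c := by
      rw [← hf.apply_eq_zero_iff, map_nsmul, hu, hq, addOrderOf_nsmul_eq_zero]
    rw [nsmul_left_comm, addOrderOf_dvd_iff_nsmul_eq_zero.mp (addOrderOf_dvd_of_mem_zmultiples hqu)]
  have := Fact.mk hd
  refine ⟨r • u, addOrderOf_eq_prime hqt fun h ↦ hft0 (by rw [← hft, h, map_zero]),
    hg.surjective, hg.ker_eq.trans (le_antisymm ?_ ?_)⟩
  · rw [AddSubgroup.zmultiples_le, hft, mem_zmultiples_nsmul_iff]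
    exact (Nat.coprime_of_lt_prime hc hlt hd).symm
  · rw [AddSubgroup.zmultiples_le, hft]
    exact nsmul_mem (AddSubgroup.mem_zmultiples d) r

/-- The group generated by `t` is the unique Sylow subgroup of the kernel of `g.comp f` in both of
its group structures. -/
theorem IsCyclicQuotient.exists_swap_of_lt_prime {f : BraceHom B C} {g : BraceHom C D} {c : B}
    {d : C} (hf : IsCyclicQuotient f c) (hg : IsCyclicQuotient g d) (hc : addOrderOf c ≠ 0)
    (hd : (addOrderOf d).Prime) (hlt : addOrderOf c < addOrderOf d) :
    ∃ (E : Type u) (_ : SkewBrace E) (h : BraceHom B E) (t : B) (k : BraceHom E D),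
      IsCyclicQuotient h t ∧ addOrderOf t = addOrderOf d ∧ IsCyclicQuotient k (h c) := by
  obtain ⟨t, ht, hgt⟩ := hf.exists_lift_addOrderOf_eq hg hc hd hlt
  have hle : AddSubgroup.zmultiples t ≤ (g.comp f).ker :=
    AddSubgroup.zmultiples_le.mpr hgt.apply_self
  have hcard : Nat.card (g.comp f).ker = addOrderOf c * addOrderOf d := hf.natCard_ker_comp hg
  have hcard_t : Nat.card (AddSubgroup.zmultiples t) = addOrderOf d :=
    (Nat.card_zmultiples t).trans ht
  obtain ⟨E, _, h, hh⟩ := IsCyclicQuotient.exists_of_forall_mem_zmultiples (g := g.comp f)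
    hgt.apply_self
    (fun x hx hqx ↦ mem_of_nsmul_eq_zero_of_natCard hd hcard_t hcard hle hc hlt hx (ht ▸ hqx))
    (fun hleft x hx hqx ↦ mem_of_pow_eq_one_of_natCard (H := hleft.subgroup)
      (L := (g.comp f).isLeftIdeal_ker.subgroup) hd hcard_t hcard hle hc hlt hx (ht ▸ hqx))
  obtain ⟨k, hk⟩ := IsCyclicQuotient.exists_of_ker_eq_sup (z := c) hh.surjective
    (hg.surjective.comp hf.surjective)
    (hgt.ker_comp_eq_sup.trans (by rw [hf.ker_eq, hh.ker_eq, sup_comm]))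
  exact ⟨E, _, h, t, k, hh, ht, hk⟩

theorem IsInfiniteSocleQuotient.lamHom_pow_eq_one {f : BraceHom B C} {g : BraceHom C D} {z : B}
    {d : C} (hf : IsInfiniteSocleQuotient f z) (hg : IsCyclicQuotient g d) {y : B}
    (hy : g (f y) = 0) : lamHom y ^ addOrderOf d = 1 := by
  have hpow : f (y ^ addOrderOf d) = 0 := by
    rw [map_pow, hg.isLeftIdeal.pow_addOrderOf_eq_one (hg.apply_eq_zero_iff.mp hy), one_eq_zero]
  have hsoc : y ^ addOrderOf d ∈ socle B :=
    AddSubgroup.zmultiples_le.mpr hf.mem_socle (hf.apply_eq_zero_iff.mp hpow)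
  rw [← map_pow, (mem_socle_iff.mp hsoc).1]

theorem IsInfiniteSocleQuotient.comp_of_nsmul_eq {f : BraceHom B C} {g : BraceHom C D} {z : B}
    {d : C} (hf : IsInfiniteSocleQuotient f z) (hg : IsCyclicQuotient g d)
    (hodd : Odd (addOrderOf d)) {w : B} (hker : (g.comp f).ker = .zmultiples w)
    (hw : addOrderOf d • w = z) : IsInfiniteSocleQuotient (g.comp f) w := by
  have hcomp : IsCyclicQuotient (g.comp f) w := ⟨hg.surjective.comp hf.surjective, hker⟩
  have hgw : g (f w) = 0 := hcomp.apply_self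
  have hw0 : addOrderOf w = 0 := by
    refine _root_.addOrderOf_eq_zero fun hfin ↦ addOrderOf_eq_zero_iff.mp hf.addOrderOf_eq_zero ?_
    rw [← hw]
    exact hfin.nsmul
  have eq_one {θ : AddMonoid.End B} (hθ : ∀ x, g (f (θ x)) = g (f x))
      (hpow : θ ^ addOrderOf d = 1) : θ = 1 :=
    end_eq_one_of_odd_pow (f := (g.comp f).toAddMonoidHom) hw0 hker hθ hodd hpow
  refine ⟨hcomp, mem_socle_iff.mpr ⟨eq_one (fun x ↦ ?_) (hf.lamHom_pow_eq_one hg hgw),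
    eq_one (fun x ↦ ?_) ?_⟩, hw0⟩
  · rw [lamHom_apply, BraceHom.map_lam, BraceHom.map_lam, hgw, ← one_eq_zero, lam_one]
  · simp only [conjEnd_apply, map_add, map_neg, hgw, zero_add, neg_zero, add_zero]
  · rw [← conjEnd_nsmul, hw, (mem_socle_iff.mp hf.mem_socle).2]

theorem IsInfiniteSocleQuotient.commute_zsmul {f : BraceHom B C} {g : BraceHom C D} {z : B} {d : C}
    (hf : IsInfiniteSocleQuotient f z) (hg : IsCyclicQuotient g d) (hodd : Odd (addOrderOf d))
    {y : B} (hy : g (f y) = 0) (k : ℤ) : Commute (k • z) y := by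
  have hkz := zsmul_mem hf.mem_socle k
  have hfix : lamHom y z = z :=
    end_apply_eq_self_of_odd_pow hf.addOrderOf_eq_zero
      (hf.isLeftIdeal y z (AddSubgroup.mem_zmultiples z)) hodd
      (by rw [hf.lamHom_pow_eq_one hg hy, AddMonoid.End.coe_one, id])
  rw [Commute, SemiconjBy, mul_eq_add_of_mem_socle hkz, mul_eq_add_lam, lam_zsmul,
    ← lamHom_apply, hfix, (addCommute_of_mem_socle hkz _).eq]

theorem IsCyclicQuotient.addOrderOf_apply_eq_zero {f : BraceHom B C} {t z : B}
    (hf : IsCyclicQuotient f t) (ht : addOrderOf t ≠ 0) (hz : addOrderOf z = 0) :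
    addOrderOf (f z) = 0 := by
  refine addOrderOf_eq_zero fun hfin ↦ addOrderOf_eq_zero_iff.mp hz ?_
  obtain ⟨m, hm, hmz⟩ := isOfFinAddOrder_iff_nsmul_eq_zero.mp hfin
  obtain ⟨n, hn⟩ := AddSubgroup.mem_zmultiples_iff.mp
    (hf.apply_eq_zero_iff.mp ((map_nsmul f m z).trans hmz))
  have hfin_nsmul : IsOfFinAddOrder (m • z) :=
    hn ▸ (addOrderOf_ne_zero_iff.mp ht).zsmul
  exact hfin_nsmul.of_nsmul hm.ne'

theorem IsCyclicQuotient.exists_zsmul_add_zsmul_eq {f : BraceHom B C} {g : BraceHom C D} {z t : B}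
    (hf : IsCyclicQuotient f z) (hg : IsCyclicQuotient g (f t)) {x : B} (hx : g (f x) = 0) :
    ∃ k n : ℤ, k • z + n • t = x := by
  obtain ⟨n, hn⟩ := AddSubgroup.mem_zmultiples_iff.mp (hg.apply_eq_zero_iff.mp hx)
  have hz : f (x + -(n • t)) = 0 := by rw [map_add, map_neg, map_zsmul, hn, add_neg_cancel]
  obtain ⟨k, hk⟩ := AddSubgroup.mem_zmultiples_iff.mp (hf.apply_eq_zero_iff.mp hz)
  exact ⟨k, n, by rw [hk, neg_add_cancel_right]⟩

theorem IsInfiniteSocleQuotient.exists_swap_of_addOrderOf_eq {f : BraceHom B C}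
    {g : BraceHom C D} {z t : B} (hf : IsInfiniteSocleQuotient f z)
    (hg : IsCyclicQuotient g (f t)) (hodd : Odd (addOrderOf (f t)))
    (ht : addOrderOf t = addOrderOf (f t)) :
    ∃ (E : Type u) (_ : SkewBrace E) (h : BraceHom B E) (k : BraceHom E D),
      IsCyclicQuotient h t ∧ IsInfiniteSocleQuotient k (h z) := by
  have hpos : 0 < addOrderOf t := ht ▸ hodd.pos
  have mem_of_nsmul_eq_zero {k n : ℤ} (hk : addOrderOf t • k • z = 0) :
      k • z + n • t ∈ AddSubgroup.zmultiples t := by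
    have hkz : k • z = 0 := hf.eq_zero_of_isOfFinAddOrder
      (by rw [map_zsmul, hf.apply_self, zsmul_zero])
      (isOfFinAddOrder_iff_nsmul_eq_zero.mpr ⟨_, hpos, hk⟩)
    exact ⟨n, by rw [hkz, zero_add]⟩
  obtain ⟨E, _, h, hh⟩ : ∃ (E : Type u) (_ : SkewBrace E) (h : BraceHom B E),
      IsCyclicQuotient h t := by
    refine IsCyclicQuotient.exists_of_forall_mem_zmultiples (g := g.comp f) hg.apply_self ?_ ?_
    · intro x hx hqx
      obtain ⟨k, n, rfl⟩ := hf.exists_zsmul_add_zsmul_eq hg hx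
      have hkz := zsmul_mem hf.mem_socle k
      rw [(addCommute_of_mem_socle hkz _).add_nsmul, addOrderOf_dvd_iff_nsmul_eq_zero.mp
        (addOrderOf_dvd_of_mem_zmultiples ⟨n, rfl⟩), add_zero] at hqx
      exact mem_of_nsmul_eq_zero hqx
    · intro hleft x hx hqx
      obtain ⟨k, n, rfl⟩ := hf.exists_zsmul_add_zsmul_eq hg hx
      have hkz := zsmul_mem hf.mem_socle k
      have hgt : g (f (n • t)) = 0 := by rw [map_zsmul, map_zsmul, hg.apply_self, zsmul_zero]
      rw [← mul_eq_add_of_mem_socle hkz, (hf.commute_zsmul hg hodd hgt k).mul_pow,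
        hleft.pow_addOrderOf_eq_one ⟨n, rfl⟩, mul_one,
        pow_eq_nsmul (lam_eq_self_of_mem_socle hkz), one_eq_zero] at hqx
      exact mem_of_nsmul_eq_zero hqx
  obtain ⟨k, hk⟩ := IsCyclicQuotient.exists_of_ker_eq_sup (z := z) hh.surjective
    (hg.surjective.comp hf.surjective)
    (hg.ker_comp_eq_sup.trans (by rw [hf.ker_eq, hh.ker_eq, sup_comm]))
  exact ⟨E, _, h, k, hh, hk, BraceHom.map_mem_socle hh.surjective hf.mem_socle,
    hh.addOrderOf_apply_eq_zero hpos.ne' hf.addOrderOf_eq_zero⟩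

theorem IsInfiniteSocleQuotient.exists_infinite_or_swap {f : BraceHom B C} {g : BraceHom C D}
    {z : B} {d : C} (hf : IsInfiniteSocleQuotient f z) (hg : IsCyclicQuotient g d)
    (hd : (addOrderOf d).Prime) (hodd : Odd (addOrderOf d)) :
    (∃ (h : BraceHom B D) (w : B), IsInfiniteSocleQuotient h w) ∨
      ∃ (E : Type u) (_ : SkewBrace E) (h : BraceHom B E) (t : B) (k : BraceHom E D),
        IsCyclicQuotient h t ∧ addOrderOf t = addOrderOf d ∧ IsInfiniteSocleQuotient k (h z) := by
  obtain ⟨u, rfl⟩ := hf.surjective d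
  have hcomm : AddCommute u z := (addCommute_of_mem_socle hf.mem_socle u).symm
  have hqu : addOrderOf (f u) • u ∈ AddSubgroup.zmultiples z := by
    rw [← hf.apply_eq_zero_iff, map_nsmul, addOrderOf_nsmul_eq_zero]
  obtain ⟨w, hsup, hw⟩ | ⟨k, hk⟩ := zmultiples_sup_eq_or_exists_nsmul_eq_zero hcomm hd hqu
  · refine .inl ⟨g.comp f, w, hf.comp_of_nsmul_eq hg hodd ?_ hw⟩
    rw [hg.ker_comp_eq_sup, hf.ker_eq, sup_comm, hsup]
  · have hft : f (u + k • z) = f u := by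
      rw [map_add, map_zsmul, hf.apply_self, zsmul_zero, add_zero]
    have ht : addOrderOf (u + k • z) = addOrderOf (f u) := by
      have := Fact.mk hd
      refine addOrderOf_eq_prime hk fun h ↦ hd.ne_one ?_
      rw [← hft, h, map_zero, addOrderOf_zero]
    rw [← hft] at hg hodd ht
    obtain ⟨E, _, h, l, hh, hl⟩ := hf.exists_swap_of_addOrderOf_eq hg hodd ht
    exact .inr ⟨E, _, h, _, l, hh, hft ▸ ht, hl⟩

end LargePrime

section SortedChain

/-- `HasSortedChain p B` is the variant of `HasSmoothChain` which allows additional factors of prime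
order greater than `p`, provided that these come first. -/
inductive HasSortedChain (p : ℕ) : (B : Type u) → [SkewBrace B] → Prop
  | smooth {n : ℕ} {B : Type u} [SkewBrace B] (hB : HasSmoothChain p n B) : HasSortedChain p B
  | largePrime {B C : Type u} [SkewBrace B] [SkewBrace C] {f : BraceHom B C} {z : B}
      (hf : IsCyclicQuotient f z) (hz : (addOrderOf z).Prime) (hlt : p < addOrderOf z)
      (hC : HasSortedChain p C) : HasSortedChain p B

variable {B C : Type u} [SkewBrace B] [SkewBrace C] {p : ℕ}

namespace HasSortedChain

theorem of_finite (hC : HasSortedChain p C) {f : BraceHom B C} {c : B}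
    (hf : IsCyclicQuotient f c) (hc : addOrderOf c ≠ 0) (hle : addOrderOf c ≤ p) :
    HasSortedChain p B := by
  induction hC generalizing B c with
  | smooth hC =>
    exact .smooth (.finite hf (Nat.mem_smoothNumbers_of_lt (Nat.pos_of_ne_zero hc)
      (Nat.lt_succ_of_le hle)) hC)
  | largePrime hg hd hlt _ ih =>
    obtain ⟨E, _, h, t, k, hh, ht, hk⟩ := hf.exists_swap_of_lt_prime hg hc hd (hle.trans_lt hlt)
    have hdvd : addOrderOf (h c) ∣ addOrderOf c := addOrderOf_map_dvd h.toAddMonoidHom c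
    have hE : HasSortedChain p E := ih hk (ne_zero_of_dvd_ne_zero hc hdvd)
      ((Nat.le_of_dvd (Nat.pos_of_ne_zero hc) hdvd).trans hle)
    exact .largePrime hh (ht ▸ hd) (ht ▸ hlt) hE

theorem of_infinite (hp : 2 ≤ p) (hC : HasSortedChain p C) {f : BraceHom B C} {z : B}
    (hf : IsInfiniteSocleQuotient f z) : HasSortedChain p B := by
  induction hC generalizing B z with
  | smooth hC => exact .smooth (.infinite hf hC)
  | largePrime hg hd hlt _ ih =>
    obtain ⟨h, w, hw⟩ | ⟨E, _, h, t, k, hh, ht, hk⟩ :=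
      hf.exists_infinite_or_swap hg hd (hd.odd_of_ne_two (hp.trans_lt hlt).ne')
    · exact ih hw
    · exact .largePrime hh (ht ▸ hd) (ht ▸ hlt) (ih hk)

theorem exists_hasSmoothChain (hB : HasSortedChain p B)
    (hmax : ∀ q : ℕ, q.Prime → (∃ x : B, addOrderOf x = q) → q ≤ p) :
    ∃ n, HasSmoothChain p n B := by
  cases hB with
  | smooth hB => exact ⟨_, hB⟩
  | largePrime _ hz hlt _ => exact absurd (hmax _ hz ⟨_, rfl⟩) hlt.not_ge

end HasSortedChain

end SortedChain

section Supersoluble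

variable {B : Type u} [SkewBrace B] {p : ℕ}

namespace BraceIdeal

variable {I J : BraceIdeal B} {x : B}

theorem quotientMap_eq_zero_iff : I.quotientMap x = 0 ↔ x ∈ I.carrier := by
  rw [← BraceHom.mem_ker, ker_quotientMap]
  rfl

theorem addSubgroup_eq_sup_zmultiples (hIJ : I.carrier ⊆ J.carrier) (hx : x ∈ J.carrier)
    (hgen : ∀ y ∈ J.carrier, ∃ n : ℤ, -(n • x) + y ∈ I.carrier) :
    J.addSubgroup = I.addSubgroup ⊔ .zmultiples x := by
  refine le_antisymm (fun y hy ↦ ?_) (sup_le hIJ (AddSubgroup.zmultiples_le.mpr hx))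
  obtain ⟨n, hn⟩ := hgen y hy
  rw [sup_comm, ← add_neg_cancel_left (n • x) y]
  exact AddSubgroup.add_mem_sup ⟨n, rfl⟩ hn

theorem exists_isCyclicQuotient (hIJ : I.carrier ⊆ J.carrier) (hx : x ∈ J.carrier)
    (hgen : ∀ y ∈ J.carrier, ∃ n : ℤ, -(n • x) + y ∈ I.carrier) :
    ∃ f : BraceHom I.Quotient J.Quotient, IsCyclicQuotient f (I.quotientMap x) := by
  refine IsCyclicQuotient.exists_of_ker_eq_sup I.quotientMap_surjective J.quotientMap_surjective ?_
  rw [ker_quotientMap, ker_quotientMap, addSubgroup_eq_sup_zmultiples hIJ hx hgen]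

theorem quotientMap_mem_socle (hx : MemSocQuot I.carrier x) :
    I.quotientMap x ∈ socle I.Quotient := by
  obtain ⟨-, hlam, hadd⟩ := hx
  refine ⟨fun c ↦ ?_, fun c ↦ ?_⟩ <;> obtain ⟨b, rfl⟩ := I.quotientMap_surjective c
  · have := quotientMap_eq_zero_iff.mpr (hlam b (Set.mem_univ b))
    rwa [map_add, map_neg, BraceHom.map_lam, neg_add_eq_zero, eq_comm] at this
  · have := quotientMap_eq_zero_iff.mpr (hadd b (Set.mem_univ b))
    rwa [map_add, map_neg, neg_add_eq_zero, map_add, map_add, eq_comm] at this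

theorem exists_isCyclicQuotient_of_quotPrimeOrder {q : ℕ} (hIJ : I.carrier ⊆ J.carrier)
    (h : QuotPrimeOrder I.carrier J.carrier q) :
    ∃ (f : BraceHom I.Quotient J.Quotient) (z : I.Quotient),
      IsCyclicQuotient f z ∧ addOrderOf z = q := by
  obtain ⟨hq, x, hxJ, hxI, hqx, hgen⟩ := h
  obtain ⟨f, hf⟩ := exists_isCyclicQuotient hIJ hxJ hgen
  have := Fact.mk hq
  refine ⟨f, _, hf, addOrderOf_eq_prime ?_ (quotientMap_eq_zero_iff.not.mpr hxI)⟩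
  rw [← map_nsmul, quotientMap_eq_zero_iff.mpr hqx]

theorem exists_isInfiniteSocleQuotient_of_quotAddInfCyclic (hIJ : I.carrier ⊆ J.carrier)
    (h : QuotAddInfCyclic I.carrier J.carrier)
    (hsoc : ∀ x ∈ J.carrier, MemSocQuot I.carrier x) :
    ∃ (f : BraceHom I.Quotient J.Quotient) (z : I.Quotient), IsInfiniteSocleQuotient f z := by
  obtain ⟨x, hxJ, hgen, hinf⟩ := h
  obtain ⟨f, hf⟩ := exists_isCyclicQuotient hIJ hxJ hgen
  refine ⟨f, _, hf, quotientMap_mem_socle (hsoc x hxJ), addOrderOf_eq_zero fun hfin ↦ ?_⟩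
  obtain ⟨m, hm, hmx⟩ := isOfFinAddOrder_iff_nsmul_eq_zero.mp hfin
  have hmI : (m : ℤ) • x ∈ I.carrier := by
    rwa [natCast_zsmul, ← quotientMap_eq_zero_iff, map_nsmul]
  exact hm.ne' (by exact_mod_cast hinf m hmI)

end BraceIdeal

theorem IsSupersoluble.hasSortedChain (hB : IsSupersoluble B) (hp : 2 ≤ p) :
    HasSortedChain p B := by
  obtain ⟨n, I, hbot, htop, hle, hfactor⟩ := hB
  have htop_quotient : HasSortedChain p (I n).Quotient := by
    have : Subsingleton (I n).Quotient := by
      refine subsingleton_of_forall_eq 0 fun c ↦ ?_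
      obtain ⟨x, rfl⟩ := (I n).quotientMap_surjective c
      exact BraceIdeal.quotientMap_eq_zero_iff.mpr (htop ▸ Set.mem_univ x)
    exact .smooth .trivial
  have hbot_quotient : HasSortedChain p (I 0).Quotient := by
    refine Nat.decreasingInduction (motive := fun i _ ↦ HasSortedChain p (I i).Quotient)
      (fun i hi hC ↦ ?_) htop_quotient (Nat.zero_le n)
    obtain ⟨hcyc, hsoc⟩ | ⟨q, hq⟩ := hfactor i hi
    · obtain ⟨f, z, hf⟩ :=
        BraceIdeal.exists_isInfiniteSocleQuotient_of_quotAddInfCyclic (hle i hi) hcyc hsoc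
      exact hC.of_infinite hp hf
    · have hprime := hq.1
      obtain ⟨f, z, hf, rfl⟩ := BraceIdeal.exists_isCyclicQuotient_of_quotPrimeOrder (hle i hi) hq
      obtain hqp | hqp := le_or_gt (addOrderOf z) p
      · exact hC.of_finite hf hprime.ne_zero hqp
      · exact .largePrime hf hprime hqp hC
  have hbot_eq : (I 0).addSubgroup = .zmultiples 0 :=
    SetLike.coe_injective (hbot.trans (by simp))
  refine hbot_quotient.of_finite (IsCyclicQuotient.of_ideal hbot_eq) ?_ ?_ <;>
    rw [addOrderOf_zero]
  · exact one_ne_zero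
  · exact one_le_two.trans hp

theorem IsSupersoluble.exists_finite_quotient_apply_ne_zero (hB : IsSupersoluble B) (hp : 2 ≤ p)
    (hmax : ∀ q : ℕ, q.Prime → (∃ x : B, addOrderOf x = q) → q ≤ p) {x : B} (hx : x ≠ 0) :
    ∃ (D : Type u) (_ : SkewBrace D) (g : BraceHom B D), Function.Surjective g ∧
      Nat.card D ∈ Nat.smoothNumbers (p + 1) ∧ g x ≠ 0 := by
  obtain ⟨n, hn⟩ := (hB.hasSortedChain hp).exists_hasSmoothChain hmax
  exact hn.exists_finite_quotient_apply_ne_zero hp hx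

end Supersoluble

/-- Let `B` be a supersoluble brace and let `p` be the largest prime in
`π(B,+) ∪ {2}`. Then `B` is residually `π`-finite, where `π` is the set of all
primes `q ≤ p`: the intersection of all ideals `I` of `B` such that `B/I` is finite
of `π`-number order is `{0}`. -/
theorem residually_pi_finite (B : Type*) [SkewBrace B] (hB : IsSupersoluble B)
    (p : ℕ) (hp : p.Prime) (hmem : p = 2 ∨ ∃ x : B, addOrderOf x = p)
    (hmax : ∀ q : ℕ, q.Prime → (∃ x : B, addOrderOf x = q) → q ≤ p) :
    ⋂ I ∈ {I : BraceIdeal B | I.toSubbrace.addSubgroup.index ≠ 0 ∧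
        ∀ q : ℕ, q.Prime → q ∣ I.toSubbrace.addSubgroup.index → q ≤ p},
      I.carrier = {0} := by
  refine Set.Subset.antisymm (fun x hx ↦ ?_)
    (Set.singleton_subset_iff.mpr (Set.mem_iInter₂.mpr fun I _ ↦ I.zero_mem))
  by_contra hx0
  obtain ⟨D, _, g, hg, hD, hgx⟩ := hB.exists_finite_quotient_apply_ne_zero hp.two_le hmax hx0
  have hindex : g.kerIdeal.toSubbrace.addSubgroup.index = Nat.card D := g.index_ker hg
  refine hgx (Set.mem_iInter₂.mp hx g.kerIdeal ⟨?_, fun q hq hdvd ↦ ?_⟩)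
  · exact hindex ▸ (Nat.mem_smoothNumbers.mp hD).1
  · exact Nat.le_of_lt_succ (Nat.mem_smoothNumbers'.mp hD q hq (hindex ▸ hdvd))

end SkewBrace
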